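/- Let 𝔤 be a 4-dimensional Lie algebra over ℝ whose underlying vector space carries a real inner product with orthonormal basis X₁,X₂,X₃,X₄, and whose Lie bracket is determined by [X₂,X₄] = γ₁·X₁ and [X₃,X₄] = γ₂·X₂ − γ₃·X₁, where γ₁ > 0, γ₂ > 0 and γ₃ ≥ 0, with all other brackets of basis vectors (up to antisymmetry) equal to zero. Then the only element E ∈ 𝔤 satisfying the parallelism identity ⟨[Y,E],Z⟩ − ⟨[Z,Y],E⟩ + ⟨[Z,E],Y⟩ = 0 for all Y,Z ∈ 𝔤 is E = 0. -/

import Mathlib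

open scoped RealInnerProductSpace

/-!
If `E` satisfies the parallelism identity and `W = ⁅Y, E⁆` commutes with `E`, then the identity
applied to `±Y` and `±W` gives `⟪W, W⟫ = ⟪W, -W⟫ = ⟪-W, -W⟫`, hence `W = -W = 0`. So the kernels of
`ad E` and `(ad E)²` agree. In a nilpotent Lie algebra this makes `E` central, and then the identity
says that `E` is orthogonal to every bracket. In the Lie algebra of Nil⁴ each central element is
itself a bracket, so `E` is orthogonal to itself.
-/

theorem end_eq_zero_of_isNilpotent_of_ker_comp_self_le {R M : Type*} [Semiring R]
    [AddCommMonoid M] [Module R M] {f : Module.End R M} (hf : IsNilpotent f)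
    (h : LinearMap.ker (f ∘ₗ f) ≤ LinearMap.ker f) : f = 0 := by
  obtain ⟨n, hn⟩ := hf
  have apply_eq_zero : ∀ k x, (f ^ k) x = 0 → f x = 0 := by
    intro k
    induction k with
    | zero => intro x hx; rw [show x = 0 from hx, map_zero]
    | succ k ih => exact fun x hx ↦ h (ih (f x) (by rwa [pow_succ] at hx))
  exact LinearMap.ext fun x ↦ apply_eq_zero n x (by rw [hn, LinearMap.zero_apply])

theorem mem_normalizer_of_span_eq_top {ι R L M : Type*} [CommRing R] [LieRing L] [LieAlgebra R L]
    [AddCommGroup M] [Module R M] [LieRingModule L M] [LieModule R L M] {X : ι → L}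
    (hX : Submodule.span R (Set.range X) = ⊤) {N : LieSubmodule R L M} {m : M}
    (h : ∀ i, ⁅X i, m⁆ ∈ N) : m ∈ N.normalizer := by
  rw [LieSubmodule.mem_normalizer]
  intro x
  have hx : x ∈ Submodule.span R (Set.range X) := hX ▸ Submodule.mem_top
  induction hx using Submodule.span_induction with
  | mem x hx => obtain ⟨i, rfl⟩ := hx; exact h i
  | zero => rw [zero_lie]; exact N.zero_mem
  | add x y _ _ hx hy => rw [add_lie]; exact N.add_mem hx hy
  | smul a x _ hx => rw [smul_lie]; exact N.smul_mem a hx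

section Parallel

variable {g V : Type*} [LieRing g] [NormedAddCommGroup V] [InnerProductSpace ℝ V]
  {φ : g → V} {E : g}

/-- The parallelism identity characterizing left-invariant SNP Weyl connections, for the inner
product of `V` pulled back to `g` along `φ`. The map `φ` is not assumed to be additive: in `stmt5`,
where it is the identity, the inner product and the Lie bracket each come with their own addition
on `g`. -/
def IsParallel (φ : g → V) (E : g) : Prop :=
  ∀ Y Z : g, ⟪φ ⁅Y, E⁆, φ Z⟫ - ⟪φ ⁅Z, Y⁆, φ E⟫ + ⟪φ ⁅Z, E⁆, φ Y⟫ = 0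

namespace IsParallel

theorem map_zero (hE : IsParallel φ E) : φ 0 = 0 := by
  have hEE := hE E E
  have h00 := hE 0 0
  simp only [lie_self, zero_lie] at hEE h00
  exact inner_self_eq_zero (𝕜 := ℝ).mp (by linarith)

theorem inner_lie_comm (hE : IsParallel φ E) (Y Z : g) :
    ⟪φ ⁅Y, Z⁆, φ E⟫ = ⟪φ ⁅Z, Y⁆, φ E⟫ := by
  linarith [hE Y Z, hE Z Y]

theorem inner_lie_of_lie_eq_zero (hE : IsParallel φ E) {Z : g} (hZ : ⁅Z, E⁆ = 0) (Y : g) :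
    ⟪φ ⁅Y, E⁆, φ Z⟫ = ⟪φ ⁅Z, Y⁆, φ E⟫ := by
  have h := hE Y Z
  rw [hZ, hE.map_zero, inner_zero_left] at h
  linarith

theorem inner_lie_eq_zero (hE : IsParallel φ E) {Y Z : g} (hY : ⁅Y, E⁆ = 0) (hZ : ⁅Z, E⁆ = 0) :
    ⟪φ ⁅Z, Y⁆, φ E⟫ = 0 := by
  rw [← hE.inner_lie_of_lie_eq_zero hZ, hY, hE.map_zero, inner_zero_left]

theorem lie_eq_zero_of_lie_lie_eq_zero [IsAddTorsionFree g] (hE : IsParallel φ E)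
    (hφ : Function.Injective φ) {Y : g} (hY : ⁅⁅Y, E⁆, E⁆ = 0) : ⁅Y, E⁆ = 0 := by
  set W := ⁅Y, E⁆
  have neg_W_lie : ⁅-W, E⁆ = 0 := by rw [neg_lie, hY, neg_zero]
  have neg_Y_lie : ⁅-Y, E⁆ = -W := neg_lie Y E
  have inner_W_W : ⟪φ W, φ W⟫ = ⟪φ ⁅W, Y⁆, φ E⟫ := hE.inner_lie_of_lie_eq_zero hY Y
  have inner_W_neg : ⟪φ W, φ (-W)⟫ = ⟪φ ⁅W, Y⁆, φ E⟫ := by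
    rw [hE.inner_lie_of_lie_eq_zero neg_W_lie Y, neg_lie, lie_skew, hE.inner_lie_comm]
  have inner_neg_neg : ⟪φ (-W), φ (-W)⟫ = ⟪φ ⁅W, Y⁆, φ E⟫ := by
    have h := hE.inner_lie_of_lie_eq_zero neg_W_lie (-Y)
    rwa [neg_Y_lie, neg_lie, lie_neg, neg_neg] at h
  have map_W_eq : φ W = φ (-W) := by
    rw [← sub_eq_zero, ← inner_self_eq_zero (𝕜 := ℝ), real_inner_sub_sub_self]
    linarith
  exact self_eq_neg.mp (hφ map_W_eq)

theorem lie_eq_zero [IsAddTorsionFree g] [LieRing.IsNilpotent g] (hE : IsParallel φ E)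
    (hφ : Function.Injective φ) (Y : g) : ⁅Y, E⁆ = 0 := by
  have lie_lie_eq (Y : g) : ⁅⁅Y, E⁆, E⁆ = ⁅E, ⁅E, Y⁆⁆ := by
    rw [← lie_skew, ← lie_skew Y, lie_neg, neg_neg]
  have ad_eq_zero : LieAlgebra.ad ℤ g E = 0 :=
    end_eq_zero_of_isNilpotent_of_ker_comp_self_le
      (LieModule.isNilpotent_toEnd_of_isNilpotent ℤ g g E) fun Y hY ↦ by
        rw [LinearMap.mem_ker, LieAlgebra.ad_apply, ← lie_skew, neg_eq_zero]
        exact hE.lie_eq_zero_of_lie_lie_eq_zero hφ ((lie_lie_eq Y).trans hY)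
  rw [← lie_skew, ← LieAlgebra.ad_apply ℤ, ad_eq_zero, LinearMap.zero_apply, neg_zero]

theorem eq_zero_of_exists_lie_eq [IsAddTorsionFree g] [LieRing.IsNilpotent g]
    (hE : IsParallel φ E) (hφ : Function.Injective φ)
    (hcenter : ∀ z : g, (∀ y : g, ⁅y, z⁆ = 0) → ∃ x y : g, ⁅x, y⁆ = z) : E = 0 := by
  have hcentral := hE.lie_eq_zero hφ
  obtain ⟨x, y, hxy⟩ := hcenter E hcentral
  have inner_self : ⟪φ E, φ E⟫ = 0 := by
    simpa only [hxy] using hE.inner_lie_eq_zero (hcentral y) (hcentral x)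
  exact hφ ((inner_self_eq_zero.mp inner_self).trans hE.map_zero.symm)

end IsParallel

end Parallel

/-- A spanning family, possibly linearly dependent, with the bracket relations of a Milnor basis
`X₁, X₂, X₃, X₄` of the Lie algebra of Nil⁴. The indices start at `0`, so `X i` stands for
`Xᵢ₊₁`. -/
structure IsNilFourFrame {R g : Type*} [CommRing R] [LieRing g] [LieAlgebra R g]
    (X : Fin 4 → g) (γ₁ γ₂ γ₃ : R) : Prop where
  span_eq_top : Submodule.span R (Set.range X) = ⊤
  lie_one_three : ⁅X 1, X 3⁆ = γ₁ • X 0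
  lie_two_three : ⁅X 2, X 3⁆ = γ₂ • X 1 - γ₃ • X 0
  lie_zero_one : ⁅X 0, X 1⁆ = 0
  lie_zero_two : ⁅X 0, X 2⁆ = 0
  lie_zero_three : ⁅X 0, X 3⁆ = 0
  lie_one_two : ⁅X 1, X 2⁆ = 0

namespace IsNilFourFrame

section CommRing

variable {R g : Type*} [CommRing R] [LieRing g] [LieAlgebra R g] {X : Fin 4 → g} {γ₁ γ₂ γ₃ : R}

theorem exists_eq_sum (hX : IsNilFourFrame X γ₁ γ₂ γ₃) (y : g) :
    ∃ c : Fin 4 → R, y = c 0 • X 0 + c 1 • X 1 + c 2 • X 2 + c 3 • X 3 := by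
  have hy : y ∈ Submodule.span R (Set.range X) := hX.span_eq_top ▸ Submodule.mem_top
  obtain ⟨c, hc⟩ := (Submodule.mem_span_range_iff_exists_fun R).mp hy
  exact ⟨c, by rw [← hc, Fin.sum_univ_four]⟩

theorem lie_one_zero (hX : IsNilFourFrame X γ₁ γ₂ γ₃) : ⁅X 1, X 0⁆ = 0 := by
  rw [← lie_skew, hX.lie_zero_one, neg_zero]

theorem lie_two_zero (hX : IsNilFourFrame X γ₁ γ₂ γ₃) : ⁅X 2, X 0⁆ = 0 := by
  rw [← lie_skew, hX.lie_zero_two, neg_zero]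

theorem lie_two_one (hX : IsNilFourFrame X γ₁ γ₂ γ₃) : ⁅X 2, X 1⁆ = 0 := by
  rw [← lie_skew, hX.lie_one_two, neg_zero]

theorem lie_three_zero (hX : IsNilFourFrame X γ₁ γ₂ γ₃) : ⁅X 3, X 0⁆ = 0 := by
  rw [← lie_skew, hX.lie_zero_three, neg_zero]

theorem lie_three_one (hX : IsNilFourFrame X γ₁ γ₂ γ₃) : ⁅X 3, X 1⁆ = -(γ₁ • X 0) := by
  rw [← lie_skew, hX.lie_one_three]

theorem lie_three_two (hX : IsNilFourFrame X γ₁ γ₂ γ₃) :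
    ⁅X 3, X 2⁆ = -(γ₂ • X 1 - γ₃ • X 0) := by
  rw [← lie_skew, hX.lie_two_three]

theorem isNilpotent (hX : IsNilFourFrame X γ₁ γ₂ γ₃) : LieRing.IsNilpotent g := by
  let C (k : ℕ) : LieIdeal R g := (⊥ : LieIdeal R g).ucs k
  have C_le_succ (k : ℕ) : C k ≤ C (k + 1) := by
    simpa only [C, LieSubmodule.ucs_succ] using LieSubmodule.le_normalizer _
  have mem_C {k : ℕ} {x : g} (h : ∀ i, ⁅X i, x⁆ ∈ C k) : x ∈ C (k + 1) := by
    simpa only [C, LieSubmodule.ucs_succ] using mem_normalizer_of_span_eq_top hX.span_eq_top h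
  have X0_mem : X 0 ∈ C 1 := mem_C fun i ↦ by
    fin_cases i <;> simp [hX.lie_one_zero, hX.lie_two_zero, hX.lie_three_zero]
  have lie13_mem : γ₁ • X 0 ∈ C 1 := (C 1).smul_mem γ₁ X0_mem
  have X1_mem : X 1 ∈ C 2 := mem_C fun i ↦ by
    fin_cases i <;> simp [hX.lie_zero_one, hX.lie_two_one, hX.lie_three_one, lie13_mem]
  have lie23_mem : γ₂ • X 1 - γ₃ • X 0 ∈ C 2 :=
    sub_mem ((C 2).smul_mem γ₂ X1_mem) ((C 2).smul_mem γ₃ (C_le_succ 1 X0_mem))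
  have X2_mem : X 2 ∈ C 3 := mem_C fun i ↦ by
    fin_cases i <;>
      simp [hX.lie_zero_two, hX.lie_one_two, hX.lie_three_two, -neg_sub, lie23_mem]
  have X3_mem : X 3 ∈ C 3 := mem_C fun i ↦ by
    fin_cases i <;>
      simp [hX.lie_zero_three, hX.lie_one_three, hX.lie_two_three, C_le_succ 1 lie13_mem, lie23_mem]
  have C_eq_top : C 3 = ⊤ := by
    rw [← LieSubmodule.toSubmodule_eq_top, eq_top_iff, ← hX.span_eq_top, Submodule.span_le]
    rintro _ ⟨i, rfl⟩
    fin_cases i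
    exacts [C_le_succ 2 (C_le_succ 1 X0_mem), C_le_succ 2 X1_mem, X2_mem, X3_mem]
  exact (LieModule.isNilpotent_iff_exists_ucs_eq_top R).mpr ⟨3, C_eq_top⟩

end CommRing

section Field

variable {K g : Type*} [Field K] [LieRing g] [LieAlgebra K g] {X : Fin 4 → g} {γ₁ γ₂ γ₃ : K}

theorem linearIndependent_zero_one (hX : IsNilFourFrame X γ₁ γ₂ γ₃) (hX₀ : X 0 ≠ 0)
    (hγ₁ : γ₁ ≠ 0) : LinearIndependent K ![X 0, X 1] := by
  refine LinearIndependent.pair_iff.mpr fun a b h ↦ ?_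
  have hlie : ⁅a • X 0 + b • X 1, X 3⁆ = (b * γ₁) • X 0 := by
    rw [add_lie, smul_lie, smul_lie, hX.lie_zero_three, hX.lie_one_three, smul_zero, zero_add,
      smul_smul]
  have hb : b = 0 := by
    rw [h, zero_lie] at hlie
    simpa [hX₀, hγ₁] using hlie.symm
  exact ⟨by simpa [hb, hX₀] using h, hb⟩

theorem exists_eq_smul_of_central (hX : IsNilFourFrame X γ₁ γ₂ γ₃) (hX₀ : X 0 ≠ 0) (hγ₁ : γ₁ ≠ 0)
    (hγ₂ : γ₂ ≠ 0) {z : g} (hz : ∀ y : g, ⁅y, z⁆ = 0) : ∃ c : K, z = c • X 0 := by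
  obtain ⟨c, rfl⟩ := hX.exists_eq_sum z
  have hc₃ : c 3 = 0 := by
    simpa [hX.lie_one_zero, hX.lie_one_two, hX.lie_one_three, hX₀, hγ₁] using hz (X 1)
  have hlie : (c 2 * γ₃ - c 1 * γ₁) • X 0 + (-(c 2 * γ₂)) • X 1 = 0 := by
    rw [← hz (X 3)]
    simp only [lie_add, lie_smul, lie_self, hX.lie_three_zero, hX.lie_three_one, hX.lie_three_two]
    module
  obtain ⟨h₁, h₂⟩ :=
    LinearIndependent.pair_iff.mp (hX.linearIndependent_zero_one hX₀ hγ₁) _ _ hlie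
  have hc₂ : c 2 = 0 := by simpa [hγ₂] using h₂
  have hc₁ : c 1 = 0 := by simpa [hc₂, hγ₁] using h₁
  exact ⟨c 0, by simp [hc₁, hc₂, hc₃]⟩

theorem exists_lie_eq_of_central (hX : IsNilFourFrame X γ₁ γ₂ γ₃) (hX₀ : X 0 ≠ 0) (hγ₁ : γ₁ ≠ 0)
    (hγ₂ : γ₂ ≠ 0) {z : g} (hz : ∀ y : g, ⁅y, z⁆ = 0) : ∃ x y : g, ⁅x, y⁆ = z := by
  obtain ⟨c, rfl⟩ := hX.exists_eq_smul_of_central hX₀ hγ₁ hγ₂ hz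
  exact ⟨(c / γ₁) • X 1, X 3,
    by rw [smul_lie, hX.lie_one_three, smul_smul, div_mul_cancel₀ c hγ₁]⟩

end Field

end IsNilFourFrame

theorem stmt5_general {K g V : Type*} [Field K] [CharZero K] [LieRing g] [LieAlgebra K g]
    [NormedAddCommGroup V] [InnerProductSpace ℝ V] {φ : g → V} (hφ : Function.Injective φ)
    {X : Fin 4 → g} {γ₁ γ₂ γ₃ : K} (hX : IsNilFourFrame X γ₁ γ₂ γ₃) (hX₀ : X 0 ≠ 0)
    (hγ₁ : γ₁ ≠ 0) (hγ₂ : γ₂ ≠ 0) {E : g} (hE : IsParallel φ E) : E = 0 := by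
  have := hX.isNilpotent
  have : IsAddTorsionFree g := .of_isTorsionFree K g
  exact hE.eq_zero_of_exists_lie_eq hφ fun _ hz ↦ hX.exists_lie_eq_of_central hX₀ hγ₁ hγ₂ hz

/-- Nil⁴ in a Milnor basis: the only `E` satisfying the parallelism identity is `E = 0`. -/
theorem stmt5 {g : Type*} [NormedAddCommGroup g] [InnerProductSpace ℝ g]
    [LieRing g] [LieAlgebra ℝ g] (X : Fin 4 → g)
    (hON : Orthonormal ℝ X) (hspan : Submodule.span ℝ (Set.range X) = ⊤)
    (γ₁ γ₂ γ₃ : ℝ) (hγ₁ : 0 < γ₁) (hγ₂ : 0 < γ₂) (hγ₃ : 0 ≤ γ₃)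
    (h24 : ⁅X 1, X 3⁆ = γ₁ • X 0)
    (h34 : ⁅X 2, X 3⁆ = γ₂ • X 1 - γ₃ • X 0)
    (h12 : ⁅X 0, X 1⁆ = 0) (h13 : ⁅X 0, X 2⁆ = 0) (h14 : ⁅X 0, X 3⁆ = 0)
    (h23 : ⁅X 1, X 2⁆ = 0)
    (E : g)
    (hpar : ∀ Y Z : g, ⟪⁅Y, E⁆, Z⟫ - ⟪⁅Z, Y⁆, E⟫ + ⟪⁅Z, E⁆, Y⟫ = 0) :
    E = 0 := by
  have hE : IsParallel (id : g → g) E := hpar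
  exact stmt5_general Function.injective_id ⟨hspan, h24, h34, h12, h13, h14, h23⟩
    (fun h ↦ hON.ne_zero 0 (h.trans hE.map_zero)) hγ₁.ne' hγ₂.ne' hE
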